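/- Let (R, 𝔪) be a commutative Noetherian local ring with dim R = d ≥ 1 and let 𝔞 be a proper ideal of R. Then an 𝔞-torsion R-module M is 𝔞-cofinite if and only if the R-module Ext^i_R(R/𝔞, M) is finitely generated for every integer 0 ≤ i ≤ d − 1. -/

import Mathlib

open CategoryTheory

universe u

/-- The `R`-module `Ext^i_R(N, M)` for two `R`-modules (objects of `ModuleCat R`). -/
noncomputable def extObj {R : Type u} [CommRing R] (N M : ModuleCat.{u} R) (i : ℕ) :
    ModuleCat.{u} R :=
  ((Ext R (ModuleCat.{u} R) i).obj (Opposite.op N)).obj M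

/-- The `R`-module `Ext^i_R(R/𝔞, M)`. -/
noncomputable def extIdeal {R : Type u} [CommRing R] (𝔞 : Ideal R) (i : ℕ)
    (M : ModuleCat.{u} R) : ModuleCat.{u} R :=
  extObj (ModuleCat.of R (R ⧸ 𝔞)) M i

/-- An `R`-module `M` is `𝔞`-cofinite if `Supp_R M ⊆ V(𝔞)` and `Ext^i_R(R/𝔞, M)` is a finitely
generated `R`-module for every `i ≥ 0`. -/
def IsCofinite {R : Type u} [CommRing R] (𝔞 : Ideal R) (M : ModuleCat.{u} R) : Prop :=
  Module.support R M ⊆ PrimeSpectrum.zeroLocus (𝔞 : Set R) ∧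
    ∀ i : ℕ, Module.Finite R (extIdeal 𝔞 i M)

/-- The Krull dimension `dim_R M` of an `R`-module `M`: the Krull dimension of its support,
i.e. the supremum of `dim R/𝔭` over primes `𝔭` in the support of `M`. -/
noncomputable def moduleDim (R : Type u) [CommRing R] (M : Type u) [AddCommGroup M]
    [Module R M] : WithBot ℕ∞ :=
  Order.krullDim (Module.support R M)

/-- An `R`-module `M` is in `FD_{≤n}` if there is a finitely generated submodule `N ⊆ M`
with `dim_R (M/N) ≤ n`. -/
def MemFD (R : Type u) [CommRing R] (n : ℕ) (M : Type u) [AddCommGroup M] [Module R M] : Prop :=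
  ∃ N : Submodule R M, N.FG ∧ moduleDim R (M ⧸ N) ≤ (n : WithBot ℕ∞)

/-- An `R`-module `M` is `𝔞`-torsion if every element is annihilated by some power of `𝔞`. -/
def IsTorsionIdeal {R : Type u} [CommRing R] (𝔞 : Ideal R) (M : Type u) [AddCommGroup M]
    [Module R M] : Prop :=
  ∀ m : M, ∃ n : ℕ, ∀ a ∈ 𝔞 ^ n, a • m = 0

/-- The arithmetic rank of an ideal `𝔞`: the least `n` such that there exist `a₁, …, aₙ ∈ R`
with `Rad (a₁, …, aₙ) = Rad 𝔞`. -/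
noncomputable def arithRank {R : Type u} [CommRing R] (𝔞 : Ideal R) : ℕ :=
  sInf {n : ℕ | ∃ f : Fin n → R, (Ideal.span (Set.range f)).radical = 𝔞.radical}

section

open CategoryTheory Abelian

/-- The homology of a short complex of modules is the target of any surjection from the cycles
whose kernel consists of the boundaries. -/
lemma CategoryTheory.ShortComplex.finite_homology_iff {R : Type u} [CommRing R]
    (S : ShortComplex (ModuleCat.{u} R)) {E : Type u} [AddCommGroup E] [Module R E]
    (q : LinearMap.ker S.g.hom →ₗ[R] E) (hq : Function.Surjective q)
    (hk : ∀ z, q z = 0 ↔ ∃ y, S.f.hom y = z.1) :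
    Module.Finite R S.homology ↔ Module.Finite R E := by
  have hker : LinearMap.range S.moduleCatToCycles = LinearMap.ker q := by
    ext z
    rw [LinearMap.mem_ker, hk, LinearMap.mem_range]
    exact exists_congr fun y => Subtype.ext_iff
  let e : S.homology ≃ₗ[R] E := S.moduleCatHomologyIso.toLinearEquiv ≪≫ₗ
    Submodule.quotEquivOfEq _ _ hker ≪≫ₗ q.quotKerEquivOfSurjective hq
  exact Module.Finite.equiv_iff e

namespace CategoryTheory.ProjectiveResolution

variable {R : Type u} [CommRing R] {N : ModuleCat.{u} R} (P : ProjectiveResolution N)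
  (M : ModuleCat.{u} R) (i : ℕ)

lemma extMk_zero_eq_zero {M : ModuleCat.{u} R} (f : P.complex.X 0 ⟶ M)
    (hf : P.complex.d 1 0 ≫ f = 0) (h : P.extMk f 1 rfl hf = 0) : f = 0 := by
  rw [← P.extEquivCohomologyClass.apply_eq_iff_eq,
    extEquivCohomologyClass_extMk, extEquivCohomologyClass_zero,
    CochainComplex.HomComplex.CohomologyClass.mk_eq_zero_iff,
    CochainComplex.HomComplex.Cocycle.toSingleMk_mem_coboundaries_iff _ _ _ _ _ 1 (by simp)] at h
  obtain ⟨g, hg⟩ := h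
  have hz : P.cochainComplex.d (-(0 : ℕ) : ℤ) 1 = 0 :=
    (P.cochainComplex.isZero_of_isStrictlyLE 0 1 (by simp)).eq_of_tgt _ _
  rw [hz, Limits.zero_comp] at hg
  exact (cancel_epi (P.cochainComplexXIso (-(0 : ℕ) : ℤ) 0 rfl).hom).1 (by rw [← hg]; simp)

/-- The linear map sending a cocycle in `Hom(P_i, M)` to its class in `Ext`. -/
noncomputable def cocycleToExt :
    LinearMap.ker (Linear.leftComp R M (P.complex.d (i + 1) i)) →ₗ[R] Abelian.Ext N M i where
  toFun f := P.extMk f.1 (i + 1) rfl f.2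
  map_add' f g := (P.add_extMk _ _ _ _ _ _).symm
  map_smul' r f := by
    refine Eq.trans ?_ ((P.extMk_comp_mk₀ f.1 (i + 1) rfl f.2 (r • 𝟙 M)).symm.trans
      (Ext.smul_eq_comp_mk₀ _ r).symm)
    congr 1

lemma cocycleToExt_surjective : Function.Surjective (P.cocycleToExt M i) := by
  intro α
  obtain ⟨f, hf, rfl⟩ := P.extMk_surjective α (i + 1) rfl
  exact ⟨⟨f, hf⟩, rfl⟩

lemma cocycleToExt_eq_zero_iff (j : ℕ) (hj : (ComplexShape.up ℕ).prev i = j)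
    (f : LinearMap.ker (Linear.leftComp R M (P.complex.d (i + 1) i))) :
    P.cocycleToExt M i f = 0 ↔ ∃ g, Linear.leftComp R M (P.complex.d i j) g = f.1 := by
  subst hj
  obtain _ | i := i
  · have hd : P.complex.d 0 ((ComplexShape.up ℕ).prev 0) = 0 :=
      HomologicalComplex.shape _ _ _ (by simp)
    simp only [hd, Linear.leftComp_apply, Limits.zero_comp, exists_const]
    refine ⟨fun h => (P.extMk_zero_eq_zero f.1 f.2 h).symm, fun h => ?_⟩
    rw [show f = 0 from Subtype.ext h.symm, map_zero]
  · exact P.extMk_eq_zero_iff f.1 _ rfl f.2 _ (by simp)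

lemma finite_homology_linearYonedaObj_iff :
    Module.Finite R ((P.complex.linearYonedaObj R M).homology i) ↔
      Module.Finite R (Abelian.Ext N M i) := by
  let e := (P.complex.linearYonedaObj R M).isoSc' _ i (i + 1) rfl (by simp)
  refine (Module.Finite.equiv_iff (ShortComplex.homologyMapIso e).toLinearEquiv).trans ?_
  exact ShortComplex.finite_homology_iff _ (P.cocycleToExt M i) (P.cocycleToExt_surjective M i)
    (P.cocycleToExt_eq_zero_iff M i _ rfl)

end CategoryTheory.ProjectiveResolution

/-- The two constructions of `Ext` agree as far as finite generation is concerned. -/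
lemma finite_extObj_iff {R : Type u} [CommRing R] (N M : ModuleCat.{u} R) (i : ℕ) :
    Module.Finite R (extObj N M i) ↔ Module.Finite R (Abelian.Ext N M i) :=
  (Module.Finite.equiv_iff ((projectiveResolution N).isoExt i M).toLinearEquiv).trans
    ((projectiveResolution N).finite_homology_linearYonedaObj_iff M i)

lemma shortExact_prod {R : Type u} [CommRing R] (A B : ModuleCat.{u} R) :
    (ModuleCat.shortComplexOfCompEqZero (LinearMap.inl R A B) (LinearMap.snd R A B)
      (by ext; simp)).ShortExact :=
  ModuleCat.shortComplex_shortExact _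
    (Function.Exact.inl_snd) LinearMap.inl_injective LinearMap.snd_surjective

section ExtFinite

variable {R : Type u} [CommRing R] [IsNoetherianRing R] {N : ModuleCat.{u} R}
  {S : ShortComplex (ModuleCat.{u} R)}

lemma fg_ker_postcomp_f (hS : S.ShortExact) (k : ℕ)
    (h : ∀ j, j + 1 = k → Module.Finite R (Ext N S.X₃ j)) :
    (LinearMap.ker ((Ext.mk₀ S.f).postcompOfLinear R N (add_zero k))).FG := by
  obtain _ | k := k
  · have := hS.mono_f
    rw [LinearMap.ker_eq_bot.2 (Ext.postcomp_mk₀_injective_of_mono N S.f)]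
    exact Submodule.fg_bot
  · have := h k rfl
    refine (Submodule.fg_range (hS.extClass.postcompOfLinear R N (a := k) rfl)).of_le ?_
    intro x hx
    exact Ext.covariant_sequence_exact₁ _ hS x hx rfl

lemma fg_ker_postcomp_g (hS : S.ShortExact) (k : ℕ) [Module.Finite R (Ext N S.X₁ k)] :
    (LinearMap.ker ((Ext.mk₀ S.g).postcompOfLinear R N (add_zero k))).FG := by
  refine (Submodule.fg_range ((Ext.mk₀ S.f).postcompOfLinear R N (add_zero k))).of_le ?_
  intro x hx
  exact Ext.covariant_sequence_exact₂ _ hS x hx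

lemma finite_of_ker_fg {E F : Type*} [AddCommGroup E] [Module R E] [AddCommGroup F] [Module R F]
    [Module.Finite R F] (f : E →ₗ[R] F) (hf : (LinearMap.ker f).FG) : Module.Finite R E :=
  ⟨Submodule.fg_of_fg_map_of_fg_inf_ker f (IsNoetherian.noetherian _) (by simpa using hf)⟩

lemma finite_ext_X₁ (hS : S.ShortExact) (k : ℕ)
    (h₃ : ∀ j, j + 1 = k → Module.Finite R (Ext N S.X₃ j)) (h₂ : Module.Finite R (Ext N S.X₂ k)) :
    Module.Finite R (Ext N S.X₁ k) :=
  finite_of_ker_fg _ (fg_ker_postcomp_f hS k h₃)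

lemma finite_ext_X₂ (hS : S.ShortExact) (k : ℕ) (h₁ : Module.Finite R (Ext N S.X₁ k))
    (h₃ : Module.Finite R (Ext N S.X₃ k)) : Module.Finite R (Ext N S.X₂ k) :=
  finite_of_ker_fg _ (fg_ker_postcomp_g hS k)

lemma finite_ext_X₃ (hS : S.ShortExact) (k : ℕ) (h₂ : Module.Finite R (Ext N S.X₂ k))
    (h₁ : Module.Finite R (Ext N S.X₁ (k + 1))) : Module.Finite R (Ext N S.X₃ k) := by
  refine finite_of_ker_fg (hS.extClass.postcompOfLinear R N (a := k) rfl) ?_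
  refine (Submodule.fg_range ((Ext.mk₀ S.g).postcompOfLinear R N (add_zero k))).of_le ?_
  intro x hx
  exact Ext.covariant_sequence_exact₃ _ hS x rfl hx

lemma finite_ext_prod (A B : ModuleCat.{u} R) (k : ℕ) (hA : Module.Finite R (Ext N A k))
    (hB : Module.Finite R (Ext N B k)) : Module.Finite R (Ext N (ModuleCat.of R (A × B)) k) :=
  finite_ext_X₂ (shortExact_prod A B) k hA hB

end ExtFinite

lemma smul_ext_quotient_eq_zero {R : Type u} [CommRing R] {𝔞 : Ideal R} {M : ModuleCat.{u} R}
    {k : ℕ} {a : R} (ha : a ∈ 𝔞) (e : Ext (ModuleCat.of R (R ⧸ 𝔞)) M k) : a • e = 0 := by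
  have h : a • 𝟙 (ModuleCat.of R (R ⧸ 𝔞)) = 0 := by
    ext
    exact Ideal.Quotient.eq_zero_iff_mem.2 (by simpa using ha)
  rw [← Ext.mk₀_id_comp e, ← Ext.smul_comp, ← Ext.mk₀_smul, h, Ext.mk₀_zero, Ext.zero_comp]

section Torsion
open Submodule

variable {R : Type u} [CommRing R] [IsNoetherianRing R] {𝔞 : Ideal R}

/-- If the submodule of elements killed by an ideal is finitely generated, then so is the
submodule of elements killed by any power of this ideal. -/
lemma fg_torsionBySet_pow {H : Type*} [AddCommGroup H] [Module R H]
    (h : (torsionBySet R H (𝔞 : Set R)).FG) (m : ℕ) :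
    (torsionBySet R H ((𝔞 ^ m : Ideal R) : Set R)).FG := by
  induction m with
  | zero =>
    convert Submodule.fg_bot
    refine (Submodule.eq_bot_iff _).2 fun x hx => ?_
    simpa using (mem_torsionBySet_iff _ _).1 hx ⟨1, by simp⟩
  | succ m ih =>
    obtain ⟨s, hs⟩ := (IsNoetherian.noetherian 𝔞 : 𝔞.FG)
    let f : H →ₗ[R] (s → H) := LinearMap.pi fun a => LinearMap.lsmul R H a.1
    refine Submodule.fg_of_fg_map_of_fg_inf_ker f ?_ ?_
    · refine (Submodule.fg_pi (fun _ : s => ih)).of_le ?_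
      rintro _ ⟨x, hx, rfl⟩ a -
      refine (mem_torsionBySet_iff _ _).2 fun b => ?_
      have hb : b.1 * a.1 ∈ 𝔞 ^ (m + 1) :=
        pow_succ 𝔞 m ▸ Ideal.mul_mem_mul b.2 (hs ▸ Ideal.subset_span a.2)
      simpa [f, mul_smul] using (mem_torsionBySet_iff _ _).1 hx ⟨_, hb⟩
    · refine h.of_le ?_
      rintro x ⟨-, hx⟩
      rw [← hs, ← torsionBySet_eq_torsionBySet_span, mem_torsionBySet_iff]
      exact fun a => congrFun (LinearMap.mem_ker.1 hx) a

lemma fg_torsionBySet_of_finite_ext {H : ModuleCat.{u} R}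
    (h : Module.Finite R (Ext (ModuleCat.of R (R ⧸ 𝔞)) H 0)) :
    (torsionBySet R H (𝔞 : Set R)).FG := by
  let e : Ext (ModuleCat.of R (R ⧸ 𝔞)) H 0 ≃ₗ[R] (R ⧸ 𝔞 →ₗ[R] H) :=
    Ext.linearEquiv₀.trans ModuleCat.homLinearEquiv
  have := Module.Finite.equiv e
  refine (Submodule.fg_range (LinearMap.applyₗ (R := R) (M₂ := H) (1 : R ⧸ 𝔞))).of_le ?_
  intro x hx
  have hle : 𝔞 ≤ LinearMap.ker (LinearMap.toSpanSingleton R H x) := fun a ha =>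
    (mem_torsionBySet_iff _ _).1 hx ⟨a, ha⟩
  exact ⟨Submodule.liftQ 𝔞 _ hle, one_smul R x⟩

lemma finite_of_finite_ext_of_pow {H : ModuleCat.{u} R}
    (h : Module.Finite R (Ext (ModuleCat.of R (R ⧸ 𝔞)) H 0)) (m : ℕ)
    (hm : ∀ a ∈ 𝔞 ^ m, ∀ x : H, a • x = 0) : Module.Finite R H := by
  refine ⟨?_⟩
  convert fg_torsionBySet_pow (fg_torsionBySet_of_finite_ext h) m
  exact (eq_top_iff.2 fun x _ => (mem_torsionBySet_iff _ _).2 fun a => hm a a.2 x).symm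

end Torsion

/-- A cochain complex of `R`-modules in nonnegative degrees. -/
structure ModuleCochain (R : Type u) [CommRing R] where
  /-- The module in each degree. -/
  X : ℕ → ModuleCat.{u} R
  /-- The differential. -/
  d : ∀ i, X i →ₗ[R] X (i + 1)
  d_comp_d : ∀ i x, d (i + 1) (d i x) = 0

namespace ModuleCochain

variable {R : Type u} [CommRing R] (C : ModuleCochain R)

/-- The cocycles. -/
def Z (i : ℕ) : Submodule R (C.X i) := LinearMap.ker (C.d i)

/-- The coboundaries. -/
def B : ∀ i, Submodule R (C.X i)
  | 0 => ⊥
  | i + 1 => LinearMap.range (C.d i)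

lemma B_le_Z (i : ℕ) : C.B i ≤ C.Z i := by
  obtain _ | i := i
  · exact bot_le
  · rintro _ ⟨x, rfl⟩
    exact C.d_comp_d i x

/-- The cohomology. -/
abbrev H (i : ℕ) : Type u := C.Z i ⧸ (C.B i).submoduleOf (C.Z i)

lemma shortExact_Z_X_B (i : ℕ) :
    (ModuleCat.shortComplexOfCompEqZero (C.Z i).subtype (C.d i).rangeRestrict
      (by ext x; exact x.2)).ShortExact :=
  ModuleCat.shortComplex_shortExact _
    (fun x => ⟨fun h => ⟨⟨x, congrArg Subtype.val h⟩, rfl⟩,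
      fun ⟨y, h⟩ => Subtype.ext (h ▸ y.2)⟩)
    Subtype.val_injective (C.d i).surjective_rangeRestrict

lemma shortExact_B_Z_H (i : ℕ) :
    (ModuleCat.shortComplexOfCompEqZero (Submodule.inclusion (C.B_le_Z i))
      ((C.B i).submoduleOf (C.Z i)).mkQ
      (by ext x; exact (Submodule.Quotient.mk_eq_zero _).2 x.2)).ShortExact :=
  ModuleCat.shortComplex_shortExact _
    (fun x => ⟨fun h =>
        ⟨⟨x.1, (Submodule.Quotient.mk_eq_zero ((C.B i).submoduleOf (C.Z i))).1 h⟩, rfl⟩,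
      fun ⟨y, h⟩ => (Submodule.Quotient.mk_eq_zero _).2 (h ▸ y.2)⟩)
    (Submodule.inclusion_injective (C.B_le_Z i)) (Submodule.mkQ_surjective _)

section Ext

variable {C} [IsNoetherianRing R] {N : ModuleCat.{u} R}

/-- If the modules of a complex have finitely generated `Ext` in degrees at most `n` and the
cohomology is killed by a power of `𝔞`, then the cohomology in degrees at most `n` is finitely
generated. -/
lemma finite_H {𝔞 : Ideal R} {n m : ℕ}
    (hX : ∀ i, ∀ k ≤ n, Module.Finite R (Ext (ModuleCat.of R (R ⧸ 𝔞)) (C.X i) k))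
    (hm : ∀ a ∈ 𝔞 ^ m, ∀ i, ∀ z ∈ C.Z i, a • z ∈ C.B i) (i : ℕ) (hi : i ≤ n) :
    Module.Finite R (C.H i) := by
  have hH : ∀ i ≤ n,
      (∀ k, k + i ≤ n + 1 →
        Module.Finite R (Ext (ModuleCat.of R (R ⧸ 𝔞)) (ModuleCat.of R (C.B i)) k)) →
      Module.Finite R (C.H i) := by
    intro i hi hB
    refine finite_of_finite_ext_of_pow (𝔞 := 𝔞) (H := ModuleCat.of R (C.H i)) ?_ m ?_
    · exact finite_ext_X₃ (C.shortExact_B_Z_H i) 0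
        (finite_ext_X₁ (C.shortExact_Z_X_B i) 0 (by simp) (hX i 0 (Nat.zero_le _)))
        (hB 1 (by omega))
    · intro a ha x
      obtain ⟨z, rfl⟩ := Submodule.mkQ_surjective _ x
      exact (Submodule.Quotient.mk_eq_zero _).2 (hm a ha i z.1 z.2)
  have hB : ∀ i, ∀ k, k + i ≤ n + 1 →
      Module.Finite R (Ext (ModuleCat.of R (R ⧸ 𝔞)) (ModuleCat.of R (C.B i)) k) := by
    intro i
    induction i with
    | zero =>
      intro k _
      have : Module.Finite R (C.B 0) := inferInstanceAs (Module.Finite R (⊥ : Submodule R _))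
      infer_instance
    | succ i ih =>
      intro k hk
      have := hH i (by omega) ih
      exact finite_ext_X₃ (C.shortExact_Z_X_B i) k (hX i k (by omega))
        (finite_ext_X₂ (C.shortExact_B_Z_H i) (k + 1) (ih (k + 1) (by omega))
          (inferInstanceAs (Module.Finite R (Ext _ (ModuleCat.of R (C.H i)) _))))
  exact hH i hi (hB i)

variable [Module.Finite R N]

lemma finite_ext_Z_B (hH : ∀ i, Module.Finite R (C.H i)) {k : ℕ}
    (hX : ∀ j < k, ∀ i, Module.Finite R (Ext N (C.X i) j)) :
    ∀ j < k, ∀ i, Module.Finite R (Ext N (ModuleCat.of R (C.Z i)) j) ∧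
      Module.Finite R (Ext N (ModuleCat.of R (C.B i)) j) := by
  intro j
  induction j using Nat.strong_induction_on with
  | _ j ih =>
    intro hj i
    have hZ : Module.Finite R (Ext N (ModuleCat.of R (C.Z i)) j) :=
      finite_ext_X₁ (C.shortExact_Z_X_B i) j
        (fun l hl => (ih l (by omega) (by omega) (i + 1)).2) (hX j hj i)
    refine ⟨hZ, finite_ext_X₁ (C.shortExact_B_Z_H i) j (fun l _ => ?_) hZ⟩
    exact inferInstanceAs (Module.Finite R (Ext _ (ModuleCat.of R (C.H i)) _))

lemma fg_ker_comp {E F G : Type*} [AddCommGroup E] [Module R E] [AddCommGroup F] [Module R F]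
    [AddCommGroup G] [Module R G] (f : E →ₗ[R] F) (g : F →ₗ[R] G)
    (hf : (LinearMap.ker f).FG) (hg : (LinearMap.ker g).FG) : (LinearMap.ker (g ∘ₗ f)).FG := by
  refine Submodule.fg_of_fg_map_of_fg_inf_ker f (hg.of_le ?_) (hf.of_le inf_le_right)
  rintro _ ⟨x, hx, rfl⟩
  exact hx

/-- If all cohomology of a complex is finitely generated, `Ext` into each term is controlled by
`Ext` into the term of degree zero, and the first differential induces the zero map on `Ext`,
then all `Ext` into the term of degree zero are finitely generated. -/
lemma finite_ext_X_zero (hH : ∀ i, Module.Finite R (C.H i))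
    (hX : ∀ k, Module.Finite R (Ext N (C.X 0) k) → ∀ i, Module.Finite R (Ext N (C.X i) k))
    (h0 : ∀ k (e : Ext N (C.X 0) k),
      e.comp (Ext.mk₀ (ModuleCat.ofHom (C.d 0))) (add_zero k) = 0) (k : ℕ) :
    Module.Finite R (Ext N (C.X 0) k) := by
  induction k using Nat.strong_induction_on with
  | _ k ih =>
    have hZB := finite_ext_Z_B (N := N) hH fun j hj i => hX j (ih j hj) i
    have hH' (i j) : Module.Finite R (Ext N (ModuleCat.of R (C.H i)) j) := by infer_instance
    have : Module.Finite R (C.B 0) := inferInstanceAs (Module.Finite R (⊥ : Submodule R _))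
    have hZ0 : Module.Finite R (Ext N (ModuleCat.of R (C.Z 0)) k) :=
      finite_ext_X₂ (C.shortExact_B_Z_H 0) k
        (inferInstanceAs (Module.Finite R (Ext N (ModuleCat.of R (C.B 0)) k))) (hH' 0 k)
    have h1 := have := hZ0; fg_ker_postcomp_g (N := N) (C.shortExact_Z_X_B 0) k
    have h2 := fg_ker_postcomp_f (N := N) (C.shortExact_B_Z_H 1) k fun j _ => hH' 1 j
    have h3 := fg_ker_postcomp_f (N := N) (C.shortExact_Z_X_B 1) k
      fun j hj => (hZB j (by omega) 2).2
    have h4 := fg_ker_comp _ _ (fg_ker_comp _ _ h1 h2) h3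
    refine ⟨?_⟩
    convert h4
    refine (eq_top_iff.2 fun e _ => ?_).symm
    rw [LinearMap.mem_ker, ← h0 k e]
    have hd : ModuleCat.ofHom (C.d 0) = ModuleCat.ofHom (C.d 0).rangeRestrict ≫
        ModuleCat.ofHom (Submodule.inclusion (C.B_le_Z 1)) ≫ ModuleCat.ofHom (C.Z 1).subtype := rfl
    rw [hd, ← Ext.mk₀_comp_mk₀, ← Ext.mk₀_comp_mk₀,
      ← Ext.comp_assoc_of_second_deg_zero, ← Ext.comp_assoc_of_second_deg_zero]
    rfl

end Ext

end ModuleCochain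

namespace ModuleCochain

variable {R : Type u} [CommRing R] (C : ModuleCochain R)

/-- The shifted mapping cone of multiplication by `x` on a complex. -/
def cone (x : R) : ModuleCochain R where
  X
    | 0 => C.X 0
    | i + 1 => ModuleCat.of R (C.X (i + 1) × C.X i)
  d
    | 0 => (C.d 0).prod (LinearMap.lsmul R _ x)
    | i + 1 => (C.d (i + 1) ∘ₗ LinearMap.fst R _ _).prod
        (x • LinearMap.fst R _ _ - C.d i ∘ₗ LinearMap.snd R _ _)
  d_comp_d
    | 0 => fun a => Prod.ext (C.d_comp_d 0 a) (by simp)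
    | i + 1 => fun a => Prod.ext (C.d_comp_d (i + 1) a.1) (by
        change x • C.d (i + 1) a.1 - C.d (i + 1) (x • a.1 - C.d i a.2) = 0
        simp [C.d_comp_d])

/-- The complex consisting of a module in degree zero. -/
def single (M : ModuleCat.{u} R) : ModuleCochain R where
  X
    | 0 => M
    | _ + 1 => ModuleCat.of R PUnit
  d _ := 0
  d_comp_d _ _ := rfl

/-- The Koszul complex of a list of ring elements with coefficients in a module. -/
def koszul (M : ModuleCat.{u} R) (l : List R) : ModuleCochain R :=
  l.foldr (fun x C => C.cone x) (single M)

lemma koszul_X_zero (M : ModuleCat.{u} R) (l : List R) : (koszul M l).X 0 = M := by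
  induction l with
  | nil => rfl
  | cons x l ih => exact ih

lemma koszul_X_induction (P : ModuleCat.{u} R → Prop) (M : ModuleCat.{u} R) (hM : P M)
    (h0 : P (ModuleCat.of R PUnit))
    (hprod : ∀ A B : ModuleCat.{u} R, P A → P B → P (ModuleCat.of R (A × B)))
    (l : List R) (i : ℕ) : P ((koszul M l).X i) := by
  induction l generalizing i with
  | nil =>
    obtain _ | i := i
    · exact hM
    · exact h0
  | cons x l ih =>
    obtain _ | i := i
    · exact ih 0
    · exact hprod _ _ (ih (i + 1)) (ih i)

lemma koszul_X_subsingleton (M : ModuleCat.{u} R) (l : List R) (i : ℕ) (hi : l.length < i) :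
    Subsingleton ((koszul M l).X i) := by
  induction l generalizing i with
  | nil =>
    obtain _ | i := i
    · simp at hi
    · exact inferInstanceAs (Subsingleton PUnit)
  | cons x l ih =>
    obtain _ | i := i
    · simp at hi
    · rw [List.length_cons] at hi
      have := ih (i + 1) (by omega)
      have := ih i (by omega)
      exact inferInstanceAs (Subsingleton ((koszul M l).X (i + 1) × (koszul M l).X i))

lemma ext_comp_prod_lsmul {N A B : ModuleCat.{u} R} (x : R) (f : A →ₗ[R] B) {k : ℕ}
    (e : Ext N A k) (he : e.comp (Ext.mk₀ (ModuleCat.ofHom f)) (add_zero k) = 0)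
    (hx : x • e = 0) :
    e.comp (Ext.mk₀ (ModuleCat.ofHom (f.prod (LinearMap.lsmul R A x)))) (add_zero k) = 0 := by
  have h : ModuleCat.ofHom (f.prod (LinearMap.lsmul R A x)) =
      ModuleCat.ofHom f ≫ ModuleCat.ofHom (LinearMap.inl R B A) +
        x • ModuleCat.ofHom (LinearMap.inr R B A) := by
    ext a
    · change f a = f a + x • (0 : B)
      simp
    · change x • a = (0 : A) + x • a
      simp
  rw [h, Ext.mk₀_add, Ext.comp_add, ← Ext.mk₀_comp_mk₀, ← Ext.comp_assoc_of_second_deg_zero,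
    Ext.mk₀_smul, Ext.comp_smul, ← Ext.smul_comp, hx, he, Ext.zero_comp, Ext.zero_comp, add_zero]

/-- The differential leaving degree zero of the Koszul complex of elements of `𝔞` induces zero
on `Ext` out of `R ⧸ 𝔞`. -/
lemma ext_comp_koszul_d_zero {𝔞 : Ideal R} (M : ModuleCat.{u} R) (l : List R)
    (hl : ∀ x ∈ l, x ∈ 𝔞) (k : ℕ)
    (e : Ext (ModuleCat.of R (R ⧸ 𝔞)) ((koszul M l).X 0) k) :
    e.comp (Ext.mk₀ (ModuleCat.ofHom ((koszul M l).d 0))) (add_zero k) = 0 := by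
  induction l with
  | nil =>
    have h : ModuleCat.ofHom ((koszul M []).d 0) = 0 := rfl
    rw [h, Ext.mk₀_zero, Ext.comp_zero]
  | cons x l ih =>
    exact ext_comp_prod_lsmul x _ e (ih (fun y hy => hl y (List.mem_cons_of_mem x hy)) e)
      (smul_ext_quotient_eq_zero (hl x List.mem_cons_self) e)

/-- The ideal of elements annihilating the cohomology of a complex. -/
def annihilator : Ideal R where
  carrier := {r | ∀ i, ∀ z ∈ C.Z i, r • z ∈ C.B i}
  add_mem' hr hs i z hz := by
    rw [add_smul]
    exact add_mem (hr i z hz) (hs i z hz)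
  zero_mem' i z _ := by simp
  smul_mem' c r hr i z hz := by
    rw [smul_eq_mul, mul_smul]
    exact (C.B i).smul_mem c (hr i z hz)

lemma mem_Z_cone_succ (x : R) (i : ℕ) (a : C.X (i + 1)) (b : C.X i) :
    ((a, b) : (C.cone x).X (i + 1)) ∈ (C.cone x).Z (i + 1) ↔
      C.d (i + 1) a = 0 ∧ x • a = C.d i b := by
  refine Prod.ext_iff.trans (and_congr Iff.rfl ?_)
  exact sub_eq_zero

lemma mem_Z_cone_zero (x : R) (a : C.X 0) :
    (show (C.cone x).X 0 from a) ∈ (C.cone x).Z 0 ↔ C.d 0 a = 0 ∧ x • a = 0 :=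
  Prod.ext_iff

lemma mem_annihilator_cone_self (x : R) : x ∈ (C.cone x).annihilator := by
  intro i z hz
  match i, z with
  | 0, z => exact ((C.mem_Z_cone_zero x z).1 hz).2
  | 1, (a, b) =>
    obtain ⟨-, h⟩ := (C.mem_Z_cone_succ x 0 a b).1 hz
    exact ⟨b, Prod.ext h.symm rfl⟩
  | i + 2, (a, b) =>
    obtain ⟨-, h⟩ := (C.mem_Z_cone_succ x (i + 1) a b).1 hz
    refine ⟨((b, 0) : C.X (i + 1) × C.X i), Prod.ext h.symm ?_⟩
    change x • b - C.d i 0 = x • b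
    simp

lemma sq_mem_annihilator_cone (x : R) {y : R} (hy : y ∈ C.annihilator) :
    y ^ 2 ∈ (C.cone x).annihilator := by
  intro i z hz
  match i, z with
  | 0, z =>
    have h : y • z = 0 := hy 0 z ((C.mem_Z_cone_zero x z).1 hz).1
    change y ^ 2 • z = 0
    rw [pow_two, mul_smul, h, smul_zero]
  | i + 1, (a, b) =>
    obtain ⟨ha, hab⟩ := (C.mem_Z_cone_succ x i a b).1 hz
    obtain ⟨c, hc⟩ := hy (i + 1) a ha
    have hb : y • b - x • c ∈ C.Z i := by
      change C.d i _ = 0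
      rw [map_sub, map_smul, map_smul, hc, ← hab, smul_comm, sub_self]
    have hb' := hy i _ hb
    obtain _ | i := i
    · have h0 : y • (y • b - x • c) = 0 := hb'
      refine ⟨y • c, Prod.ext ?_ ?_⟩
      · change C.d 0 (y • c) = y ^ 2 • a
        rw [map_smul, hc, pow_two, mul_smul]
      · change x • y • c = y ^ 2 • b
        rw [smul_sub, sub_eq_zero] at h0
        rw [pow_two, mul_smul, h0, smul_comm]
    · obtain ⟨e, he⟩ := hb'
      refine ⟨((y • c, -e) : C.X (i + 1) × C.X i), Prod.ext ?_ ?_⟩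
      · change C.d (i + 1) (y • c) = y ^ 2 • a
        rw [map_smul, hc, pow_two, mul_smul]
      · change x • y • c - C.d i (-e) = y ^ 2 • b
        rw [map_neg, he, smul_sub, pow_two, mul_smul, smul_comm x y c]
        abel

lemma ofList_le_radical_annihilator_koszul (M : ModuleCat.{u} R) (l : List R) :
    Ideal.ofList l ≤ (koszul M l).annihilator.radical := by
  induction l with
  | nil => simp
  | cons x l ih =>
    rw [Ideal.ofList_cons, sup_le_iff, Ideal.span_singleton_le_iff_mem]
    refine ⟨Ideal.le_radical (mem_annihilator_cone_self _ x), fun y hy => ?_⟩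
    obtain ⟨n, hn⟩ := ih hy
    exact ⟨n * 2, by rw [pow_mul]; exact sq_mem_annihilator_cone _ x hn⟩

section Top

variable {C} (x : R) (n : ℕ) [hs : Subsingleton (C.X (n + 1))]

/-- The projection from the cone. -/
def coneFst : ∀ i, (C.cone x).X i →ₗ[R] C.X i
  | 0 => LinearMap.id
  | i + 1 => LinearMap.fst R (C.X (i + 1)) (C.X i)

lemma B_cone_le_comap (i : ℕ) : (C.cone x).B i ≤ (C.B i).comap (coneFst x i) := by
  match i with
  | 0 => exact bot_le
  | 1 =>
    rintro _ ⟨a, rfl⟩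
    exact ⟨a, rfl⟩
  | i + 2 =>
    rintro _ ⟨a, rfl⟩
    exact ⟨a.1, rfl⟩

lemma fg_torsionBy_of_finite_H_cone [IsNoetherianRing R] (h : Module.Finite R ((C.cone x).H n)) :
    (Submodule.torsionBy R (C.X n ⧸ C.B n) x).FG := by
  let f : (C.cone x).H n →ₗ[R] (C.X n ⧸ C.B n) :=
    Submodule.mapQ _ (C.B n) (coneFst x n ∘ₗ ((C.cone x).Z n).subtype)
      (fun z hz => B_cone_le_comap x n hz)
  refine (Submodule.fg_range f).of_le ?_
  intro y hy
  obtain ⟨a, rfl⟩ := Submodule.mkQ_surjective _ y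
  have ha : x • a ∈ C.B n := (Submodule.Quotient.mk_eq_zero (C.B n)).1 hy
  suffices ∃ z ∈ (C.cone x).Z n, coneFst x n z = a by
    obtain ⟨z, hz, rfl⟩ := this
    exact ⟨Submodule.Quotient.mk ⟨z, hz⟩, rfl⟩
  obtain _ | n := n
  · exact ⟨a, (C.mem_Z_cone_zero x a).2 ⟨Subsingleton.elim _ _, ha⟩, rfl⟩
  · obtain ⟨b, hb⟩ := ha
    exact ⟨(a, b), (C.mem_Z_cone_succ x n a b).2 ⟨Subsingleton.elim _ _, hb.symm⟩, rfl⟩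

lemma finite_H_cone_succ (F : Submodule R (C.X n ⧸ C.B n)) (hF : F.FG)
    (h : ∀ y, ∃ z, y - x • z ∈ F) : Module.Finite R ((C.cone x).H (n + 1)) := by
  let g : C.X n →ₗ[R] (C.cone x).Z (n + 1) :=
    LinearMap.codRestrict _ (LinearMap.inr R (C.X (n + 1)) (C.X n)) fun b =>
      (C.mem_Z_cone_succ x n 0 b).2 ⟨map_zero _, Subsingleton.elim _ _⟩
  have hg : C.B n ≤ (((C.cone x).B (n + 1)).submoduleOf ((C.cone x).Z (n + 1))).comap g := by
    obtain _ | n := n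
    · exact bot_le
    · rintro _ ⟨c, rfl⟩
      refine ⟨((0, -c) : C.X (n + 1) × C.X n), Prod.ext (Subsingleton.elim _ _) ?_⟩
      change x • (0 : C.X (n + 1)) - C.d n (-c) = C.d n c
      simp
  let f := Submodule.mapQ (C.B n) _ g hg
  have hf : Function.Surjective f := by
    rintro y
    obtain ⟨⟨⟨a, b⟩, hab⟩, rfl⟩ := Submodule.mkQ_surjective _ y
    refine ⟨Submodule.Quotient.mk b, ?_⟩
    refine congrArg Submodule.Quotient.mk (Subtype.ext (Prod.ext (Subsingleton.elim _ _) rfl))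
  have hx : ∀ z, f (x • z) = 0 := by
    intro z
    obtain ⟨b, rfl⟩ := Submodule.mkQ_surjective _ z
    refine (Submodule.Quotient.mk_eq_zero _).2 ?_
    change g (x • b) ∈ ((C.cone x).B (n + 1)).submoduleOf ((C.cone x).Z (n + 1))
    obtain _ | n := n
    · exact ⟨b, Prod.ext (Subsingleton.elim _ _) rfl⟩
    · refine ⟨((b, 0) : C.X (n + 1) × C.X n), Prod.ext (Subsingleton.elim _ _) ?_⟩
      change x • b - C.d n 0 = x • b
      simp
  have hT : F.map f = ⊤ := by
    refine eq_top_iff.2 fun y _ => ?_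
    obtain ⟨y, rfl⟩ := hf y
    obtain ⟨z, hz⟩ := h y
    exact ⟨_, hz, by rw [map_sub, hx, sub_zero]⟩
  exact ⟨hT ▸ hF.map f⟩

end Top

end ModuleCochain

/-- A longer list of elements of `𝔞` cuts out more of the primes not containing `𝔞`. -/
lemma exists_cons_le_height {R : Type*} [CommRing R] [IsNoetherianRing R] (𝔞 : Ideal R) {n : ℕ}
    {l : List R} (hl : ∀ p : Ideal R, p.IsPrime → Ideal.ofList l ≤ p → ¬ 𝔞 ≤ p → n ≤ p.height) :
    ∃ x ∈ 𝔞, ∀ p : Ideal R, p.IsPrime → Ideal.ofList (x :: l) ≤ p → ¬ 𝔞 ≤ p →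
      ((n + 1 : ℕ) : ℕ∞) ≤ p.height := by
  have hfin : {q | q ∈ (Ideal.ofList l).minimalPrimes ∧ ¬ 𝔞 ≤ q}.Finite :=
    (Ideal.finite_minimalPrimes_of_isNoetherianRing R _).subset fun q hq => hq.1
  have hx : ¬ (𝔞 : Set R) ⊆ ⋃ q ∈ (hfin.toFinset : Set (Ideal R)), q := by
    rw [Ideal.subset_union_prime (f := fun q : Ideal R => q) ⊤ ⊤ fun q hq _ _ =>
      (hfin.mem_toFinset.1 hq).1.isPrime]
    rintro ⟨q, hq, h⟩
    exact (hfin.mem_toFinset.1 hq).2 h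
  obtain ⟨x, hxa, hx⟩ := Set.not_subset.1 hx
  refine ⟨x, hxa, fun p hp hlp hap => ?_⟩
  rw [Ideal.ofList_cons, sup_le_iff, Ideal.span_singleton_le_iff_mem] at hlp
  obtain ⟨q, hq, hqp⟩ := Ideal.exists_minimalPrimes_le hlp.2
  have haq : ¬ 𝔞 ≤ q := fun h => hap (h.trans hqp)
  have hxq : x ∉ q := fun h => hx (Set.mem_biUnion (hfin.mem_toFinset.2 ⟨hq, haq⟩) h)
  have := hq.isPrime
  have hlt : q < p := lt_of_le_of_ne hqp fun h => hxq (h ▸ hlp.1)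
  rw [Nat.cast_add, Nat.cast_one]
  exact (add_le_add_left (hl q hq.isPrime hq.1.2 haq) 1).trans
    (Ideal.height_add_one_le_of_lt_of_isPrime hlt)

lemma exists_list_le_height {R : Type*} [CommRing R] [IsNoetherianRing R] (𝔞 : Ideal R) (n : ℕ) :
    ∃ l : List R, l.length = n ∧ (∀ x ∈ l, x ∈ 𝔞) ∧
      ∀ p : Ideal R, p.IsPrime → Ideal.ofList l ≤ p → ¬ 𝔞 ≤ p → n ≤ p.height := by
  induction n with
  | zero => exact ⟨[], rfl, by simp, by simp⟩
  | succ n ih =>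
    obtain ⟨l, rfl, hla, hl⟩ := ih
    obtain ⟨x, hx, h⟩ := exists_cons_le_height 𝔞 hl
    exact ⟨x :: l, rfl, by simpa [hx] using hla, h⟩

/-- A finitely generated module all of whose elements are killed by powers of the maximal ideal
is Artinian. -/
lemma isArtinian_of_forall_exists_pow_smul_eq_zero {R : Type*} [CommRing R] [IsNoetherianRing R]
    [IsLocalRing R] {W : Type*} [AddCommGroup W] [Module R W] [Module.Finite R W]
    (h : ∀ w : W, ∃ k, ∀ r ∈ IsLocalRing.maximalIdeal R ^ k, r • w = 0) : IsArtinian R W := by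
  revert h
  induction ‹Module.Finite R W› using
    IsNoetherianRing.induction_on_isQuotientEquivQuotientPrime R with
  | subsingleton N => exact fun _ => inferInstance
  | quotient N p e =>
    intro h
    obtain ⟨k, hk⟩ := h (e.symm (Submodule.Quotient.mk 1))
    have hp : IsLocalRing.maximalIdeal R ≤ p.1 := by
      refine p.2.le_of_pow_le (n := k) fun r hr => ?_
      have h1 := hk r hr
      rw [← map_smul, EmbeddingLike.map_eq_zero_iff] at h1
      simpa using (Submodule.Quotient.mk_eq_zero _).1 h1
    have : p.1.IsMaximal := by
      rw [← (IsLocalRing.maximalIdeal.isMaximal R).eq_of_le p.2.ne_top hp]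
      infer_instance
    have : IsSimpleModule R (R ⧸ p.1) := isSimpleModule_iff_isCoatom.2 this.out
    exact e.symm.isArtinian_iff.1 inferInstance
  | exact N₁ N₂ N₃ f g hf hg hfg h₁ h₃ =>
    intro h
    have := h₁ fun w => (h (f w)).imp fun k hk r hr =>
      hf (by rw [map_smul, hk r hr, map_zero])
    have := h₃ fun w => by
      obtain ⟨w, rfl⟩ := hg w
      exact (h w).imp fun k hk r hr => by rw [← map_smul, hk r hr, map_zero]
    exact isArtinian_of_range_eq_ker f g (LinearMap.exact_iff.1 hfg).symm

lemma IsLocalRing.exists_pow_le_of_le_radical {R : Type*} [CommRing R] [IsNoetherianRing R]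
    [IsLocalRing R] {I : Ideal R} (h : IsLocalRing.maximalIdeal R ≤ I.radical) :
    ∃ k, IsLocalRing.maximalIdeal R ^ k ≤ I :=
  Ideal.exists_pow_le_of_le_radical_of_fg h (IsNoetherian.noetherian _)

section Local

variable {R : Type*} [CommRing R] [IsNoetherianRing R] [IsLocalRing R] {𝔞 J : Ideal R} {x : R}

/-- If `𝔞` is locally contained in the radical of `J` away from the closed point, then up to
`x`-power torsion for `x ∈ 𝔞` the quotient by `𝔞 + J` is supported at the closed point. -/
lemma exists_maximalIdeal_le_radical_sup_comap (hx : x ∈ 𝔞)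
    (h : ∀ p : Ideal R, p.IsPrime → 𝔞 ≤ p → p ≠ IsLocalRing.maximalIdeal R →
      ∀ q : Ideal R, q.IsPrime → q ≤ p → J ≤ q → 𝔞 ≤ q) :
    ∃ n, IsLocalRing.maximalIdeal R ≤
      (𝔞 ⊔ Submodule.comap (LinearMap.lsmul R R (x ^ n)) J).radical := by
  let I : ℕ →o Submodule R R :=
    ⟨fun n => Submodule.comap (LinearMap.lsmul R R (x ^ n)) J,
    monotone_nat_of_le_succ fun n s hs => by
      change x ^ (n + 1) * s ∈ J
      rw [pow_succ', mul_assoc]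
      exact J.mul_mem_left x hs⟩
  obtain ⟨n, hn⟩ := monotone_stabilizes_iff_noetherian.2 ‹IsNoetherianRing R› I
  refine ⟨n, ?_⟩
  rw [Ideal.radical_eq_sInf]
  refine le_sInf ?_
  rintro p ⟨hle, hp⟩
  rw [sup_le_iff] at hle
  by_contra hne
  have hpm : p ≠ IsLocalRing.maximalIdeal R := fun h => hne h.ge
  have hdisj : ¬ Disjoint (J : Set R) (p.primeCompl ⊔ Submonoid.powers x : Submonoid R) := by
    intro hd
    obtain ⟨q, hq, hJq, hqd⟩ := Ideal.exists_le_prime_disjoint _ _ hd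
    have hqp : q ≤ p := fun s hs => by
      by_contra hsp
      exact Set.disjoint_left.1 hqd hs ((le_sup_left : p.primeCompl ≤ _) hsp)
    exact Set.disjoint_left.1 hqd (h p hp hle.1 hpm q hq hqp hJq hx)
      ((le_sup_right : Submonoid.powers x ≤ _) (Submonoid.mem_powers x))
  obtain ⟨r, hrJ, hr⟩ := Set.not_disjoint_iff.1 hdisj
  obtain ⟨s, hs, t, ⟨j, rfl⟩, rfl⟩ := Submonoid.mem_sup.1 hr
  have hsj : s ∈ I j := by
    change x ^ j * s ∈ J
    rwa [mul_comm]
  refine hs (hle.2 ?_)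
  change s ∈ I n
  rw [hn _ (le_max_left n j)]
  exact I.monotone (le_max_right n j) hsj

variable {N : Type*} [AddCommGroup N] [Module R N]

/-- If the kernel of multiplication by `x` on a suitable `𝔞`-torsion module is finitely generated,
then so is the cokernel. -/
lemma exists_fg_sub_smul_mem (hx : x ∈ 𝔞) (hN : ∀ y : N, ∃ t, ∀ a ∈ 𝔞 ^ t, a • y = 0)
    (hJ : ∀ a ∈ J, ∀ y : N, a • y = 0)
    (h : ∀ p : Ideal R, p.IsPrime → 𝔞 ≤ p → p ≠ IsLocalRing.maximalIdeal R →
      ∀ q : Ideal R, q.IsPrime → q ≤ p → J ≤ q → 𝔞 ≤ q)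
    (hV : (Submodule.torsionBy R N x).FG) :
    ∃ F : Submodule R N, F.FG ∧ ∀ y, ∃ z, y - x • z ∈ F := by
  obtain ⟨n, hn⟩ := exists_maximalIdeal_le_radical_sup_comap hx h
  have htor (y : N) : ∃ k, ∀ r ∈ IsLocalRing.maximalIdeal R ^ k, r • x ^ n • y = 0 := by
    obtain ⟨t, ht⟩ := hN y
    refine IsLocalRing.exists_pow_le_of_le_radical (I := Ideal.torsionOf R N (x ^ n • y))
      (hn.trans (Ideal.radical_le_radical_iff.2 (sup_le ?_ ?_)))
    · refine fun a ha => ⟨t, ?_⟩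
      rw [Ideal.mem_torsionOf_iff, smul_comm, ht _ (Ideal.pow_mem_pow ha t), smul_zero]
    · refine fun a ha => Ideal.le_radical ?_
      rw [Ideal.mem_torsionOf_iff, smul_smul, mul_comm]
      exact hJ _ ha y
  let W (j : ℕ) : Submodule R N :=
    LinearMap.range (LinearMap.lsmul R N (x ^ j)) ⊓ Submodule.torsionBy R N x
  have hW : Antitone W := antitone_nat_of_succ_le fun j => by
    refine inf_le_inf_right _ ?_
    rintro _ ⟨y, rfl⟩
    exact ⟨x • y, by simp [pow_succ, smul_smul, mul_comm]⟩
  have : Module.Finite R (W n) := Module.Finite.iff_fg.2 (hV.of_le inf_le_right)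
  have : IsArtinian R (W n) := isArtinian_of_forall_exists_pow_smul_eq_zero fun w => by
    obtain ⟨y, hy⟩ := w.2.1
    obtain ⟨k, hk⟩ := htor y
    exact ⟨k, fun r hr => Subtype.ext ((congrArg (r • ·) hy.symm).trans (hk r hr))⟩
  obtain ⟨n₁, hn₁⟩ := IsArtinian.monotone_stabilizes
    (⟨fun j => OrderDual.toDual ((W (n + j)).submoduleOf (W n)), fun i j hij =>
      Submodule.comap_mono (hW (by omega))⟩ : ℕ →o (Submodule R (W n))ᵒᵈ)
  have hstab (j : ℕ) (hj : n + n₁ ≤ j) : W (n + n₁) ≤ W j := by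
    obtain ⟨i, rfl⟩ := Nat.exists_eq_add_of_le (show n ≤ j by omega)
    have h1 : (W (n + n₁)).submoduleOf (W n) = (W (n + i)).submoduleOf (W n) :=
      hn₁ i (by omega)
    intro w hw
    exact (SetLike.ext_iff.1 h1 ⟨w, hW (by omega) hw⟩).1 hw
  refine ⟨Submodule.torsionBy R N (x ^ (n + n₁)), ?_, ?_⟩
  · convert fg_torsionBySet_pow (𝔞 := Ideal.span {x}) (H := N) ?_ (n + n₁) using 1
    · rw [Ideal.span_singleton_pow, Submodule.torsionBySet_span_singleton_eq]
    · rwa [Submodule.torsionBySet_span_singleton_eq]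
  · have key (j : ℕ) : ∀ y : N, x ^ j • y = 0 → ∃ z, x ^ (n + n₁) • (y - x • z) = 0 := by
      induction j with
      | zero => exact fun y hy => ⟨0, by rw [pow_zero, one_smul] at hy; simp [hy]⟩
      | succ j ih =>
        intro y hy
        by_cases hj : n + n₁ ≤ j
        · have hyj : x ^ j • y ∈ W j :=
            ⟨⟨y, rfl⟩, (smul_smul x (x ^ j) y).trans (pow_succ' x j ▸ hy)⟩
          obtain ⟨w, hw⟩ := (hstab (j + 1) (by omega) (hW hj hyj)).1
          have hw' : x ^ (j + 1) • w = x ^ j • y := hw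
          obtain ⟨z, hz⟩ := ih (y - x • w) (by
            rw [smul_sub, smul_smul, ← pow_succ, hw', sub_self])
          exact ⟨w + z, by rwa [smul_add, ← sub_sub]⟩
        · obtain ⟨i, hi⟩ := Nat.exists_eq_add_of_le (show j + 1 ≤ n + n₁ by omega)
          exact ⟨0, by rw [smul_zero, sub_zero, hi, add_comm, pow_add, mul_smul, hy, smul_zero]⟩
    intro y
    obtain ⟨t, ht⟩ := hN y
    exact key t y (ht _ (Ideal.pow_mem_pow hx t))

end Local

lemma IsTorsionIdeal.support_subset {R : Type u} [CommRing R] {𝔞 : Ideal R} {M : Type u}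
    [AddCommGroup M] [Module R M] (h : IsTorsionIdeal 𝔞 M) :
    Module.support R M ⊆ PrimeSpectrum.zeroLocus (𝔞 : Set R) := by
  intro p hp
  obtain ⟨m, hm⟩ := Module.mem_support_iff'.1 hp
  obtain ⟨t, ht⟩ := h m
  refine p.2.le_of_pow_le (n := t) fun a ha => ?_
  by_contra hap
  exact hm a hap (ht a ha)

lemma IsTorsionIdeal.koszul_X {R : Type u} [CommRing R] {𝔞 : Ideal R} {M : ModuleCat.{u} R}
    (h : IsTorsionIdeal 𝔞 M) (l : List R) (i : ℕ) :
    IsTorsionIdeal 𝔞 ((ModuleCochain.koszul M l).X i) := by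
  refine ModuleCochain.koszul_X_induction (fun A => IsTorsionIdeal 𝔞 A) M h
    (fun _ => ⟨0, fun _ _ => rfl⟩) ?_ l i
  rintro A B hA hB ⟨a, b⟩
  obtain ⟨s, hs⟩ := hA a
  obtain ⟨t, ht⟩ := hB b
  exact ⟨max s t, fun r hr => Prod.ext
    (hs r (Ideal.pow_le_pow_right (le_max_left s t) hr))
    (ht r (Ideal.pow_le_pow_right (le_max_right s t) hr))⟩

lemma finite_ext_koszul_X {R : Type u} [CommRing R] [IsNoetherianRing R] {N M : ModuleCat.{u} R}
    [Module.Finite R N] {k : ℕ} (h : Module.Finite R (Ext N M k)) (l : List R) (i : ℕ) :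
    Module.Finite R (Ext N ((ModuleCochain.koszul M l).X i) k) := by
  refine ModuleCochain.koszul_X_induction (fun A => Module.Finite R (Ext N A k)) M h ?_
    (fun A B hA hB => finite_ext_prod A B k hA hB) l i
  have : Module.Finite R (ModuleCat.of R PUnit.{u + 1}) :=
    inferInstanceAs (Module.Finite R PUnit.{u + 1})
  infer_instance

lemma height_le_of_ne_maximalIdeal {R : Type*} [CommRing R] [IsLocalRing R] {n : ℕ}
    (hdim : ringKrullDim R = (n + 1 : ℕ)) {p : Ideal R} (hp : p.IsPrime)
    (hpm : p ≠ IsLocalRing.maximalIdeal R) : p.height ≤ n := by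
  have hm : (IsLocalRing.maximalIdeal R).height = (n + 1 : ℕ) := by
    have := IsLocalRing.maximalIdeal_height_eq_ringKrullDim (R := R)
    rw [hdim] at this
    exact_mod_cast this
  have h := Ideal.height_add_one_le_of_lt_of_isPrime
    (lt_of_le_of_ne (IsLocalRing.le_maximalIdeal hp.ne_top) hpm)
  rw [hm, Nat.cast_add, Nat.cast_one] at h
  exact (ENat.add_le_add_iff_right ENat.one_ne_top).1 h

section LocalRing

variable {R : Type u} [CommRing R] [IsNoetherianRing R] [IsLocalRing R] {𝔞 : Ideal R} {n : ℕ}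

/-- A proper ideal of a local ring of dimension `n + 1` is contained up to radical in an ideal
generated by `n + 1` of its elements, and off the closed point `n` elements suffice. -/
lemma exists_list_radical (hdim : ringKrullDim R = (n + 1 : ℕ)) (ha : 𝔞 ≠ ⊤) :
    ∃ (x : R) (l : List R), l.length = n ∧ (∀ y ∈ x :: l, y ∈ 𝔞) ∧
      𝔞 ≤ (Ideal.ofList (x :: l)).radical ∧
      ∀ p : Ideal R, p.IsPrime → 𝔞 ≤ p → p ≠ IsLocalRing.maximalIdeal R →
        ∀ q : Ideal R, q.IsPrime → q ≤ p → Ideal.ofList l ≤ q → 𝔞 ≤ q := by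
  obtain ⟨l, hln, hla, hl⟩ := exists_list_le_height 𝔞 n
  obtain ⟨x, hx, hxl⟩ := exists_cons_le_height 𝔞 hl
  refine ⟨x, l, hln, by simpa [hx] using hla, ?_, ?_⟩
  · rw [Ideal.radical_eq_sInf]
    refine le_sInf ?_
    rintro p ⟨hlp, hp⟩
    by_contra hap
    have hpm : p ≠ IsLocalRing.maximalIdeal R := by
      rintro rfl
      exact hap (IsLocalRing.le_maximalIdeal ha)
    have h := (hxl p hp hlp hap).trans (height_le_of_ne_maximalIdeal hdim hp hpm)
    exact absurd (Nat.cast_le.1 h) (by omega)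
  · intro p hp hap hpm q hq hqp hlq
    by_contra haq
    have hlt : q < p := lt_of_le_of_ne hqp fun h => haq (h ▸ hap)
    have h := (add_le_add_left (hl q hq hlq haq) 1).trans
      ((Ideal.height_add_one_le_of_lt_of_isPrime hlt).trans
        (height_le_of_ne_maximalIdeal hdim hp hpm))
    exact absurd (Nat.cast_le.1 (by exact_mod_cast h : ((n + 1 : ℕ) : ℕ∞) ≤ n)) (by omega)

open ModuleCochain in
lemma finite_H_koszul (hdim : ringKrullDim R = (n + 1 : ℕ)) (ha : 𝔞 ≠ ⊤) {M : ModuleCat.{u} R}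
    (htor : IsTorsionIdeal 𝔞 M)
    (hM : ∀ i ≤ n, Module.Finite R (Ext (ModuleCat.of R (R ⧸ 𝔞)) M i)) :
    ∃ l : List R, (∀ y ∈ l, y ∈ 𝔞) ∧ ∀ i, Module.Finite R ((koszul M l).H i) := by
  obtain ⟨x, l, hln, hla, hrad, hl⟩ := exists_list_radical hdim ha
  refine ⟨x :: l, hla, ?_⟩
  obtain ⟨m, hm⟩ := Ideal.exists_pow_le_of_le_radical_of_fg
    (hrad.trans (Ideal.radical_le_radical_iff.2 (ofList_le_radical_annihilator_koszul M (x :: l))))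
    (IsNoetherian.noetherian 𝔞)
  have hlow : ∀ i ≤ n, Module.Finite R ((koszul M (x :: l)).H i) :=
    finite_H (fun i k hk => finite_ext_koszul_X (hM k hk) _ i) fun a ha => hm ha
  have hs : Subsingleton ((koszul M l).X (n + 1)) :=
    koszul_X_subsingleton M l (n + 1) (by omega)
  have hN (y : (koszul M l).X n ⧸ (koszul M l).B n) : ∃ t, ∀ a ∈ 𝔞 ^ t, a • y = 0 := by
    obtain ⟨y, rfl⟩ := Submodule.mkQ_surjective _ y
    exact (htor.koszul_X l n y).imp fun t ht a ha => by rw [← map_smul, ht a ha, map_zero]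
  have hJ (a : R) (ha : a ∈ (koszul M l).annihilator)
      (y : (koszul M l).X n ⧸ (koszul M l).B n) : a • y = 0 := by
    obtain ⟨y, rfl⟩ := Submodule.mkQ_surjective _ y
    exact (Submodule.Quotient.mk_eq_zero _).2 (ha n y (Subsingleton.elim _ _))
  intro i
  obtain hi | rfl | hi : i ≤ n ∨ i = n + 1 ∨ n + 1 < i := by omega
  · exact hlow i hi
  · obtain ⟨F, hF, h⟩ := exists_fg_sub_smul_mem (x := x) (𝔞 := 𝔞) (J := (koszul M l).annihilator)
      (N := (koszul M l).X n ⧸ (koszul M l).B n) (hla x List.mem_cons_self) hN hJ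
      (fun p hp hap hpm q hq hqp hJq => hl p hp hap hpm q hq hqp
        ((ofList_le_radical_annihilator_koszul M l).trans (hq.radical_le_iff.2 hJq)))
      (fg_torsionBy_of_finite_H_cone (C := koszul M l) x n (hlow n le_rfl))
    exact finite_H_cone_succ (C := koszul M l) x n F hF h
  · have := koszul_X_subsingleton M (x :: l) i (by simpa [hln] using hi)
    have : Subsingleton ((koszul M (x :: l)).H i) := (Submodule.mkQ_surjective _).subsingleton
    infer_instance

lemma finite_ext_of_finite_ext_of_local (hdim : ringKrullDim R = (n + 1 : ℕ)) (ha : 𝔞 ≠ ⊤)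
    {M : ModuleCat.{u} R} (htor : IsTorsionIdeal 𝔞 M)
    (hM : ∀ i ≤ n, Module.Finite R (Ext (ModuleCat.of R (R ⧸ 𝔞)) M i)) (k : ℕ) :
    Module.Finite R (Ext (ModuleCat.of R (R ⧸ 𝔞)) M k) := by
  obtain ⟨l, hl, hH⟩ := finite_H_koszul hdim ha htor hM
  rw [← ModuleCochain.koszul_X_zero M l]
  refine ModuleCochain.finite_ext_X_zero hH (fun k h => ?_)
    (ModuleCochain.ext_comp_koszul_d_zero M l hl) k
  rw [ModuleCochain.koszul_X_zero] at h
  exact finite_ext_koszul_X h l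

end LocalRing

end

/-- Yang–Shen, Lemma 3.5: let `(R, 𝔪)` be a noetherian local ring with `dim R = d ≥ 1` and `𝔞`
a proper ideal of `R`. An `𝔞`-torsion `R`-module `M` is `𝔞`-cofinite if and only if
`Ext^i_R(R/𝔞, M)` is finitely generated for all `i ≤ d - 1`. -/
theorem isCofinite_iff_of_local_dim
    {R : Type u} [CommRing R] [IsNoetherianRing R] [IsLocalRing R]
    (d : ℕ) (hd : 1 ≤ d) (hdim : ringKrullDim R = d)
    (𝔞 : Ideal R) (ha : 𝔞 ≠ ⊤) (M : ModuleCat.{u} R) (htor : IsTorsionIdeal 𝔞 M) :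
    IsCofinite 𝔞 M ↔ ∀ i : ℕ, i ≤ d - 1 → Module.Finite R (extIdeal 𝔞 i M) := by
  obtain ⟨n, rfl⟩ := Nat.exists_eq_add_of_le' hd
  refine ⟨fun h i _ => h.2 i, fun h => ⟨htor.support_subset, fun i => ?_⟩⟩
  exact (finite_extObj_iff _ M i).2 (finite_ext_of_finite_ext_of_local hdim ha htor
    (fun j hj => (finite_extObj_iff _ M j).1 (h j hj)) i)
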